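/- arXiv:2201.10456 — 4 statements merged into one kernel-verified Lean document; each statement's English description precedes it below -/
import Mathlib

section
/- Let M and N be partially ordered sets and let f : M^ω → N^ω be a causal stream function that is monotone with respect to the product orders on M^ω and N^ω. Let S be the least set of stream functions M^ω → N^ω that contains f and is closed under functional stream derivatives (for all h ∈ S and a ∈ M, h_a ∈ S). Then every h ∈ S is causal and monotone, and the output and transition functions of the derived Mealy machine are monotone in both arguments: for all h, h′ ∈ S with h ⪯ h′ and all a, a′ ∈ M with a ≤ a′, one has h[a] ≤ h′[a′] in N and h_a ⪯ h′_{a′}. -/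
/-- Cons a head onto a stream (streams are functions `ℕ → α`). -/
def scons {α : Type*} (a : α) (σ : ℕ → α) : ℕ → α
  | 0 => a
  | n + 1 => σ n

/-- A stream function is causal if its `i`-th output depends only on the first `i+1` inputs. -/
def Causal {M N : Type*} (f : (ℕ → M) → (ℕ → N)) : Prop :=
  ∀ i : ℕ, ∀ σ τ : ℕ → M, (∀ j ≤ i, σ j = τ j) → f σ i = f τ i

/-- Functional stream derivative of `f` on input `a`. -/
def sderiv {M N : Type*} (f : (ℕ → M) → (ℕ → N)) (a : M) : (ℕ → M) → (ℕ → N) :=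
  fun σ i => f (scons a σ) (i + 1)

/-- Output stream of a Mealy machine with transition `T` and output `O`, from state `s`. -/
def mOut {S M N : Type*} (T : S → M → S) (O : S → M → N) : S → (ℕ → M) → ℕ → N
  | s, σ, 0 => O s (σ 0)
  | s, σ, k + 1 => mOut T O (T s (σ 0)) (fun n => σ (n + 1)) k

section Causal

variable {M N : Type*}

lemma scons_eq_scons_of_forall_le {a : M} {σ τ : ℕ → M} {i : ℕ}
    (h : ∀ j ≤ i, σ j = τ j) :
    ∀ j ≤ i + 1, scons a σ j = scons a τ j
  | 0, _ => rfl
  | j + 1, hj => h j (Nat.le_of_succ_le_succ hj)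

lemma causal_sderiv {f : (ℕ → M) → (ℕ → N)} (hf : Causal f) (a : M) :
    Causal (sderiv f a) :=
  fun i _ _ h => hf (i + 1) _ _ (scons_eq_scons_of_forall_le h)

end Causal

section Monotone

lemma scons_le_scons {M : Type*} [LE M] {a a' : M} {σ σ' : ℕ → M} (ha : a ≤ a') (hσ : σ ≤ σ') :
    scons a σ ≤ scons a' σ'
  | 0 => ha
  | i + 1 => hσ i

variable {M N : Type*} [Preorder M] [Preorder N]

lemma monotone_sderiv {f : (ℕ → M) → (ℕ → N)} (hf : Monotone f) (a : M) :
    Monotone (sderiv f a) :=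
  fun _ _ hσ i => hf (scons_le_scons le_rfl hσ) (i + 1)

/-- Entry `0` of this inequality compares the outputs of the derived Mealy machine, the later
entries compare its transitions. -/
lemma apply_scons_le_apply_scons {g h : (ℕ → M) → (ℕ → N)} (hgh : g ≤ h) (hh : Monotone h)
    {a a' : M} (ha : a ≤ a') (σ : ℕ → M) : g (scons a σ) ≤ h (scons a' σ) :=
  calc
    g (scons a σ) ≤ h (scons a σ) := hgh _
    _ ≤ h (scons a' σ) := hh (scons_le_scons ha le_rfl)

lemma sderiv_le_sderiv {g h : (ℕ → M) → (ℕ → N)} (hgh : g ≤ h) (hh : Monotone h)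
    {a a' : M} (ha : a ≤ a') : sderiv g a ≤ sderiv h a' :=
  fun σ i => apply_scons_le_apply_scons hgh hh ha σ (i + 1)

end Monotone

/-- `IsIteratedDeriv f h` says that `h` is obtained from `f` by finitely many functional stream
derivatives, i.e. that `h` is a state of the Mealy machine derived from `f`. As an inductive
predicate it is the least set containing `f` and closed under derivatives. -/
inductive IsIteratedDeriv {M N : Type*} (f : (ℕ → M) → (ℕ → N)) : ((ℕ → M) → (ℕ → N)) → Prop
  | refl : IsIteratedDeriv f f
  | sderiv {h : (ℕ → M) → (ℕ → N)} (hh : IsIteratedDeriv f h) (a : M) :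
      IsIteratedDeriv f (sderiv h a)

namespace IsIteratedDeriv

variable {M N : Type*} {f h : (ℕ → M) → (ℕ → N)}

lemma causal (hh : IsIteratedDeriv f h) (hf : Causal f) : Causal h := by
  induction hh with
  | refl => exact hf
  | sderiv _ a ih => exact causal_sderiv ih a

lemma monotone [Preorder M] [Preorder N] (hh : IsIteratedDeriv f h) (hf : Monotone f) :
    Monotone h := by
  induction hh with
  | refl => exact hf
  | sderiv _ a ih => exact monotone_sderiv ih a

end IsIteratedDeriv

theorem derived_mealy_monotone_general {M N : Type*} [Preorder M] [Preorder N]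
    {f : (ℕ → M) → (ℕ → N)} (hf : Causal f) (hfm : Monotone f) :
    (∀ h, IsIteratedDeriv f h → Causal h ∧ Monotone h) ∧
    (∀ g h, IsIteratedDeriv f h → g ≤ h → ∀ a a' : M, a ≤ a' →
      (∀ σ : ℕ → M, g (scons a σ) 0 ≤ h (scons a' σ) 0) ∧ sderiv g a ≤ sderiv h a') := by
  refine ⟨fun h hh => ⟨hh.causal hf, hh.monotone hfm⟩, fun g h hh hgh a a' ha => ⟨?_, ?_⟩⟩
  · exact fun σ => apply_scons_le_apply_scons hgh (hh.monotone hfm) ha σ 0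
  · exact sderiv_le_sderiv hgh (hh.monotone hfm) ha

/-- Every member of the least set of stream functions containing a monotone causal `f` and
closed under functional stream derivatives is causal and monotone, and the output and
transition functions of the derived Mealy machine are monotone in both arguments. -/
theorem derived_mealy_monotone {M N : Type*} [PartialOrder M] [PartialOrder N]
    (f : (ℕ → M) → (ℕ → N)) (hf : Causal f) (hfm : Monotone f)
    (S : Set ((ℕ → M) → (ℕ → N)))
    (hfS : f ∈ S)
    (hcl : ∀ h ∈ S, ∀ a : M, sderiv h a ∈ S)
    (hleast : ∀ S' : Set ((ℕ → M) → (ℕ → N)),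
      f ∈ S' → (∀ h ∈ S', ∀ a : M, sderiv h a ∈ S') → S ⊆ S') :
    (∀ h ∈ S, Causal h ∧ Monotone h) ∧
    (∀ h ∈ S, ∀ h' ∈ S, (∀ σ : ℕ → M, h σ ≤ h' σ) →
      ∀ a a' : M, a ≤ a' →
        (∀ σ : ℕ → M, h (scons a σ) 0 ≤ h' (scons a' σ) 0) ∧
        (∀ σ : ℕ → M, sderiv h a σ ≤ sderiv h' a' σ)) := by
  have hS : S ⊆ {h | IsIteratedDeriv f h} := hleast _ .refl fun _ hh => hh.sderiv
  obtain ⟨hstate, hmealy⟩ := derived_mealy_monotone_general hf hfm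
  exact ⟨fun h hh => hstate h (hS hh), fun h _ h' hh' => hmealy h h' (hS hh')⟩
end

section
/- Let f : M^ω → N^ω be a causal stream function and let S be the least set of stream functions containing f and closed under functional stream derivatives. Consider the Mealy machine S_f = (S, f, T_S, O_S) where T_S(h)(a) = h_a and O_S(h)(a) = h[a]. Then the output stream of S_f equals f, i.e. !S_f = f. -/
section

variable {S M N α : Type*}

lemma scons_head_tail (σ : ℕ → α) : scons (σ 0) (fun n => σ (n + 1)) = σ := by
  funext n
  cases n <;> rfl

lemma sderiv_head_tail (f : (ℕ → M) → (ℕ → N)) (σ : ℕ → M) (k : ℕ) :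
    sderiv f (σ 0) (fun n => σ (n + 1)) k = f σ (k + 1) := by
  rw [sderiv, scons_head_tail]

/-- Finality of the Mealy coalgebra of causal stream functions: `hT` and `hO` say that `sem` is a
homomorphism into it, and the output stream is the only such homomorphism. -/
theorem derived_mealy_outputStream_eq_general (T : S → M → S) (O : S → M → N)
    (sem : S → (ℕ → M) → (ℕ → N)) (hT : ∀ s a, sem (T s a) = sderiv (sem s) a)
    (hO : ∀ s a σ, O s a = sem s (scons a σ) 0) (s : S) :
    mOut T O s = sem s := by
  funext σ k
  induction k generalizing s σ with
  | zero =>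
    calc mOut T O s σ 0 = O s (σ 0) := rfl
      _ = sem s (scons (σ 0) fun n => σ (n + 1)) 0 := hO s (σ 0) _
      _ = sem s σ 0 := by rw [scons_head_tail]
  | succ k ih =>
    calc mOut T O s σ (k + 1) = mOut T O (T s (σ 0)) (fun n => σ (n + 1)) k := rfl
      _ = sem (T s (σ 0)) (fun n => σ (n + 1)) k := ih _ _
      _ = sderiv (sem s) (σ 0) (fun n => σ (n + 1)) k := by rw [hT]
      _ = sem s σ (k + 1) := sderiv_head_tail (sem s) σ k

end

/-- The Mealy machine `S_f` derived from a causal stream function `f` (states: the least set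
of stream functions containing `f` and closed under functional stream derivatives; transition
`T h a = h_a`; output `O h a = h[a]`; initial state `f`) has output stream equal to `f`. -/
theorem derived_mealy_outputStream_eq {M N : Type*}
    (f : (ℕ → M) → (ℕ → N)) (hf : Causal f)
    (S : Set ((ℕ → M) → (ℕ → N))) (hfS : f ∈ S)
    (hcl : ∀ h ∈ S, ∀ a : M, sderiv h a ∈ S)
    (hleast : ∀ S' : Set ((ℕ → M) → (ℕ → N)),
      f ∈ S' → (∀ h ∈ S', ∀ a : M, sderiv h a ∈ S') → S ⊆ S')
    (T : S → M → S) (O : S → M → N)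
    (hT : ∀ (h : S) (a : M), (T h a : (ℕ → M) → (ℕ → N)) = sderiv (h : (ℕ → M) → (ℕ → N)) a)
    (hO : ∀ (h : S) (a : M) (σ : ℕ → M),
      O h a = (h : (ℕ → M) → (ℕ → N)) (scons a σ) 0) :
    mOut T O ⟨f, hfS⟩ = f :=
  derived_mealy_outputStream_eq_general T O Subtype.val hT hO ⟨f, hfS⟩
end

section
/- Let f : M^ω → N^ω be a causal stream function and let S be the least set of stream functions containing f and closed under functional stream derivatives. If B = (S′, s₀′, T′, O′) is any Mealy machine with input set M and output set N such that !B = f, then the cardinality of S is at most the cardinality of S′. In particular, the Mealy machine S_f = (S, f, T_S, O_S) with T_S(h)(a) = h_a and O_S(h)(a) = h[a] has the smallest state space among all Mealy machines whose output stream is f. -/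
universe u v w

section OutputStream

variable {S M N : Type*} (T : S → M → S) (O : S → M → N)

theorem sderiv_mOut (s : S) (a : M) : sderiv (mOut T O s) a = mOut T O (T s a) :=
  rfl

theorem sderiv_mem_range_mOut {h : (ℕ → M) → (ℕ → N)} (hh : h ∈ Set.range (mOut T O)) (a : M) :
    sderiv h a ∈ Set.range (mOut T O) := by
  obtain ⟨s, rfl⟩ := hh
  exact ⟨T s a, (sderiv_mOut T O s a).symm⟩

end OutputStream

/-- The least set of stream functions containing a causal `f` and closed under functional
stream derivatives has cardinality at most that of the state space of any Mealy machine whose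
output stream is `f`: the derived machine `S_f` has the smallest state space. -/
theorem derived_mealy_minimal {M : Type u} {N : Type v} {S' : Type w}
    (f : (ℕ → M) → (ℕ → N)) (hf : Causal f)
    (S : Set ((ℕ → M) → (ℕ → N))) (hfS : f ∈ S)
    (hcl : ∀ h ∈ S, ∀ a : M, sderiv h a ∈ S)
    (hleast : ∀ S'' : Set ((ℕ → M) → (ℕ → N)),
      f ∈ S'' → (∀ h ∈ S'', ∀ a : M, sderiv h a ∈ S'') → S ⊆ S'')
    (s0' : S') (T' : S' → M → S') (O' : S' → M → N)
    (hB : mOut T' O' s0' = f) :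
    Cardinal.lift.{w} (Cardinal.mk ↥S) ≤ Cardinal.lift.{max u v} (Cardinal.mk S') := by
  have S_subset_range : S ⊆ Set.range (mOut T' O') :=
    hleast _ ⟨s0', hB⟩ fun _ hh a => sderiv_mem_range_mOut T' O' hh a
  calc Cardinal.lift.{w} (Cardinal.mk ↥S)
      ≤ Cardinal.lift.{w} (Cardinal.mk ↥(Set.range (mOut T' O'))) :=
        Cardinal.lift_le.mpr (Cardinal.mk_le_mk_of_subset S_subset_range)
    _ ≤ Cardinal.lift.{max u v} (Cardinal.mk S') := Cardinal.mk_range_le_lift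
end

section
/- Let M be a nonempty set and N a set. The map sending a causal stream function f : M^ω → N^ω to its family of approximants (f_i)_{i∈ℕ} is a bijection between the set of causal stream functions M^ω → N^ω and the product ∏_{i∈ℕ} (M^{i+1} → N) of sets of functions. -/
section Approximants

variable {M N : Type*}

/-- The prefix `(σ 0, …, σ i)` of a stream; as in the approximant `f_i`, index `i` means length
`i + 1`. -/
def streamPrefix (i : ℕ) (σ : ℕ → M) : Fin (i + 1) → M :=
  fun j => σ j

/-- The approximants `f_i` of a stream function, where `ext i v` is the input stream at which
`f_i v` is read off. It is meant to continue `v`, that is, `ext i` should be a section of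
`streamPrefix i`. -/
def approximants (ext : ∀ i, (Fin (i + 1) → M) → ℕ → M) (f : (ℕ → M) → ℕ → N) :
    ∀ i, (Fin (i + 1) → M) → N :=
  fun i v => f (ext i v) i

/-- The stream function whose `i`-th output is `F i` applied to the first `i + 1` inputs: the
inverse of taking approximants. -/
def ofApproximants (F : ∀ i, (Fin (i + 1) → M) → N) : (ℕ → M) → ℕ → N :=
  fun σ i => F i (streamPrefix i σ)

theorem streamPrefix_eq_iff {i : ℕ} {σ τ : ℕ → M} :
    streamPrefix i σ = streamPrefix i τ ↔ ∀ j ≤ i, σ j = τ j := by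
  simp only [funext_iff, Fin.forall_iff, streamPrefix, Nat.lt_succ_iff]

theorem causal_iff_factorsThrough_streamPrefix {f : (ℕ → M) → ℕ → N} :
    Causal f ↔ ∀ i, Function.FactorsThrough (fun σ => f σ i) (streamPrefix i) := by
  simp only [Causal, Function.FactorsThrough, streamPrefix_eq_iff]

theorem causal_ofApproximants (F : ∀ i, (Fin (i + 1) → M) → N) : Causal (ofApproximants F) :=
  causal_iff_factorsThrough_streamPrefix.2 fun i _ _ h => congrArg (F i) h

variable {ext : ∀ i, (Fin (i + 1) → M) → ℕ → M}

theorem approximants_ofApproximants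
    (hext : ∀ i, Function.RightInverse (ext i) (streamPrefix i))
    (F : ∀ i, (Fin (i + 1) → M) → N) : approximants ext (ofApproximants F) = F :=
  funext₂ fun i v => congrArg (F i) (hext i v)

theorem Causal.ofApproximants_approximants {f : (ℕ → M) → ℕ → N} (hf : Causal f)
    (hext : ∀ i, Function.RightInverse (ext i) (streamPrefix i)) :
    ofApproximants (approximants ext f) = f :=
  funext₂ fun σ i =>
    causal_iff_factorsThrough_streamPrefix.1 hf i (hext i (streamPrefix i σ))

theorem causal_equiv_approximants_general
    (hext : ∀ i, Function.RightInverse (ext i) (streamPrefix i)) :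
    Function.Bijective
      (fun f : {f : (ℕ → M) → ℕ → N // Causal f} => approximants ext f.1) :=
  Function.bijective_iff_has_inverse.2
    ⟨fun F => ⟨ofApproximants F, causal_ofApproximants F⟩,
      fun f => Subtype.ext (f.2.ofApproximants_approximants hext),
      approximants_ofApproximants hext⟩

end Approximants

/-- For nonempty `M`, the map sending a causal stream function to its family of approximants
`(f_i : M^{i+1} → N)_{i ∈ ℕ}` is a bijection. -/
theorem causal_equiv_approximants {M N : Type*} [Nonempty M] :
    Function.Bijective
      (fun f : {f : (ℕ → M) → (ℕ → N) // Causal f} =>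
        (fun i (v : Fin (i + 1) → M) =>
          f.1 (fun j => if h : j < i + 1 then v ⟨j, h⟩ else Classical.arbitrary M) i :
          (i : ℕ) → (Fin (i + 1) → M) → N)) :=
  causal_equiv_approximants_general fun _ _ => funext fun j => dif_pos j.isLt
end
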